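/- arXiv:1010.0219 — 3 statements merged into one kernel-verified Lean document; each statement's English description precedes it below -/
import Mathlib

section
/- For every permutation π of {1,…,n}, the prefix exchange distance of π equals n + c(Γ(π)) − 2·c₁(Γ(π)) − δ, where δ = 0 if π(1) = 1 and δ = 2 otherwise. -/
/-!
Let `a` be the distinguished position, `0` for prefix exchanges, and put `w π = c(π) + 2 m(π)`,
where `m(π)` is the number of points other than `a` moved by `π`. An exchange `π ↦ π * swap a j`
lowers `w` by at most one, and for `π ≠ 1` some exchange lowers it by exactly one: take `j = π a`
if `a` is moved, and any moved `j` otherwise. As `w 1 = n`, the distance of `π` is `w π - n`,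
which is the asserted number because `m(π)` is `n - c₁(π)`, less one if `a` is moved.

The effect of a transposition `swap x y` on `c` is read off from the partition into cycles: once the
classes of `x` and `y` are merged, `π` and `π * swap x y` have the same cycle partition, and the
merging costs a class exactly when `x` and `y` were in different ones. So `c` changes by at most
one, and it grows by one if `π x = y ≠ x`, since `y` leaves the cycle of `x` and becomes a fixed
point.
-/

/-- The number of fixed points of `π`, i.e. `c₁(Γ(π))`, the number of `1`-cycles in the
graph of `π`. -/
def fixedCount {n : ℕ} (π : Equiv.Perm (Fin n)) : ℕ :=
  (Finset.univ.filter fun x => π x = x).card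

/-- `c(Γ(π))` : the number of cycles in the disjoint cycle decomposition of `π`,
fixed points counting as cycles of length one. -/
def cycleCount {n : ℕ} (π : Equiv.Perm (Fin n)) : ℕ :=
  Multiset.card π.cycleType + fixedCount π

/-- The prefix exchange distance : the minimum number of prefix exchanges `ε(1,j)`
(`2 ≤ j ≤ n`, i.e. `j ≠ 0` in this 0-indexed encoding, where position `1` of the paper
is the index `0`) whose successive application transforms `π` into the identity,
an exchange acting on `π` by `π ↦ π ∘ ε(1,j)`. -/
noncomputable def ped {n : ℕ} [NeZero n] (π : Equiv.Perm (Fin n)) : ℕ :=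
  sInf {k | ∃ l : List (Fin n), l.length = k ∧ (∀ j ∈ l, j ≠ 0) ∧
    l.foldl (fun τ j => τ * Equiv.swap 0 j) π = 1}

open Equiv Equiv.Perm Finset

lemma range_update_id {β : Type*} [DecidableEq β] {p q : β} (h : p ≠ q) :
    Set.range (Function.update id p q) = {p}ᶜ := by
  ext b
  refine ⟨?_, fun hb => ⟨b, Function.update_of_ne hb _ _⟩⟩
  rintro ⟨c, rfl⟩
  rcases eq_or_ne c p with rfl | hc
  · simpa using h.symm
  · simpa [Function.update_of_ne hc] using hc

section Gluing

variable {α : Type*}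

/-- The finest equivalence relation identifying `x` and `y`. The classes of `r ⊔ gluing x y` are
those of `r`, with the classes of `x` and `y` merged. -/
def gluing (x y : α) : Setoid α :=
  Relation.EqvGen.setoid fun a b => a = x ∧ b = y

lemma gluing_le_iff {r : Setoid α} {x y : α} : gluing x y ≤ r ↔ r x y := by
  refine ⟨fun h => h (.rel _ _ ⟨rfl, rfl⟩), fun h => Setoid.eqvGen_le ?_⟩
  rintro _ _ ⟨rfl, rfl⟩
  exact h

lemma gluing_rel (x y : α) : gluing x y x y :=
  gluing_le_iff.1 le_rfl

lemma gluing_rel_swap_apply [DecidableEq α] (x y a : α) : gluing x y a (swap x y a) := by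
  rcases eq_or_ne a x with rfl | hx
  · simpa only [swap_apply_left] using gluing_rel a y
  · rcases eq_or_ne a y with rfl | hy
    · simpa only [swap_apply_right] using (gluing x a).symm' (gluing_rel x a)
    · simpa only [swap_apply_of_ne_of_ne hx hy] using (gluing x y).refl' a

lemma sup_gluing_eq_ker (r : Setoid α) [DecidableEq (Quotient r)] (x y : α) :
    r ⊔ gluing x y =
      Setoid.ker (Function.update id (Quotient.mk r x) (Quotient.mk r y) ∘ Quotient.mk r) := by
  set s := r ⊔ gluing x y
  refine le_antisymm (sup_le (fun a b hab => ?_) (gluing_le_iff.2 ?_)) fun a b hab => ?_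
  · rw [Setoid.ker_def, Function.comp_apply, Function.comp_apply, Quotient.sound hab]
  · by_cases h : Quotient.mk r y = Quotient.mk r x <;> simp [Setoid.ker_def, h]
  · let g : Quotient r → Quotient s := Setoid.map_of_le le_sup_left
    have hxy : g (Quotient.mk r y) = g (Quotient.mk r x) :=
      Quotient.sound (s.symm' (gluing_le_iff.1 le_sup_right))
    have hg : g ∘ Function.update id (Quotient.mk r x) (Quotient.mk r y) = g := by
      rw [Function.comp_update, hxy, Function.comp_id, Function.update_eq_self]
    exact Quotient.exact
      ((congrFun hg _).symm.trans ((congrArg g hab).trans (congrFun hg _)))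

lemma card_quotient_sup_gluing_add_one {r : Setoid α} [Finite (Quotient r)] {x y : α}
    (h : ¬ r x y) :
    Nat.card (Quotient (r ⊔ gluing x y)) + 1 = Nat.card (Quotient r) := by
  classical
  have hne : Quotient.mk r x ≠ Quotient.mk r y := fun he => h (Quotient.exact he)
  rw [sup_gluing_eq_ker, Nat.card_congr (Setoid.quotientKerEquivRange _),
    Quotient.mk_surjective.range_comp, range_update_id hne, Nat.card_coe_set_eq,
    ← Set.ncard_singleton (Quotient.mk r x), add_comm, Set.ncard_add_ncard_compl]

lemma card_quotient_le_sup_gluing_add_one (r : Setoid α) [Finite (Quotient r)] (x y : α) :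
    Nat.card (Quotient r) ≤ Nat.card (Quotient (r ⊔ gluing x y)) + 1 := by
  by_cases h : r x y
  · rw [sup_eq_left.2 (gluing_le_iff.2 h)]
    exact Nat.le_succ _
  · exact (card_quotient_sup_gluing_add_one h).ge

lemma card_quotient_anti {r s : Setoid α} [Finite (Quotient r)] (h : r ≤ s) :
    Nat.card (Quotient s) ≤ Nat.card (Quotient r) :=
  Nat.card_le_card_of_surjective (Setoid.map_of_le h) <|
    Function.Surjective.of_comp (g := Quotient.mk r) Quotient.mk_surjective

end Gluing

section CycleCounting

variable {α : Type*}

/-- The number of cycles of `π`, fixed points included, counted as the classes of the relation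
`SameCycle π`. It is `0` by convention if there are infinitely many. -/
noncomputable def numCycles (π : Perm α) : ℕ :=
  Nat.card (Quotient (SameCycle.setoid π))

lemma sameCycle_setoid_le_iff {π : Perm α} {r : Setoid α} :
    SameCycle.setoid π ≤ r ↔ ∀ a, r a (π a) := by
  refine ⟨fun h a => h (sameCycle_apply_right.2 .rfl), fun h a b hab => ?_⟩
  obtain ⟨i, rfl⟩ := hab
  induction i with
  | zero => exact r.refl' a
  | succ i ih =>
    rw [add_comm, zpow_one_add, Perm.mul_apply]
    exact r.trans' ih (h _)
  | pred i ih =>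
    refine r.trans' ih (r.symm' ?_)
    simpa only [← Perm.mul_apply, ← zpow_one_add, add_sub_cancel] using h ((π ^ (-(i : ℤ) - 1)) a)

lemma sameCycle_setoid_apply (π : Perm α) (a : α) : SameCycle.setoid π a (π a) :=
  sameCycle_setoid_le_iff.1 le_rfl a

lemma sameCycle_setoid_mul_swap_sup_gluing [DecidableEq α] (π : Perm α) (x y : α) :
    SameCycle.setoid (π * swap x y) ⊔ gluing x y = SameCycle.setoid π ⊔ gluing x y := by
  have hle (σ : Perm α) :
      SameCycle.setoid (σ * swap x y) ≤ SameCycle.setoid σ ⊔ gluing x y := by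
    refine sameCycle_setoid_le_iff.2 fun a => ?_
    have hswap : (SameCycle.setoid σ ⊔ gluing x y) a (swap x y a) :=
      (le_sup_right : gluing x y ≤ _) (gluing_rel_swap_apply x y a)
    exact Setoid.trans' _ hswap
      (sameCycle_setoid_le_iff.1 (le_sup_left : SameCycle.setoid σ ≤ _) (swap x y a))
  refine le_antisymm (sup_le (hle π) le_sup_right) (sup_le ?_ le_sup_right)
  simpa only [mul_assoc, swap_mul_self, mul_one] using hle (π * swap x y)

variable [Finite α] [DecidableEq α]

lemma numCycles_le_mul_swap_add_one (π : Perm α) (x y : α) :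
    numCycles π ≤ numCycles (π * swap x y) + 1 :=
  calc numCycles π
    _ ≤ Nat.card (Quotient (SameCycle.setoid π ⊔ gluing x y)) + 1 :=
      card_quotient_le_sup_gluing_add_one _ x y
    _ = Nat.card (Quotient (SameCycle.setoid (π * swap x y) ⊔ gluing x y)) + 1 := by
      rw [sameCycle_setoid_mul_swap_sup_gluing]
    _ ≤ numCycles (π * swap x y) + 1 :=
      Nat.add_le_add_right (card_quotient_anti le_sup_left) 1

lemma numCycles_mul_swap_of_apply_eq {π : Perm α} {x y : α} (hxy : x ≠ y) (h : π x = y) :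
    numCycles (π * swap x y) = numCycles π + 1 := by
  have hsame : SameCycle.setoid π x y := h ▸ sameCycle_setoid_apply π x
  have hfix : (π * swap x y) y = y := by simp [h]
  have hsplit : ¬ SameCycle.setoid (π * swap x y) x y := fun hs =>
    hxy (SameCycle.eq_of_right hs hfix)
  rw [numCycles, numCycles, ← card_quotient_sup_gluing_add_one hsplit,
    sameCycle_setoid_mul_swap_sup_gluing, sup_eq_left.2 (gluing_le_iff.2 hsame)]

lemma numCycles_mul_swap_add_one_of_apply_eq_self {π : Perm α} {x y : α} (hxy : x ≠ y)
    (hx : π x = x) : numCycles (π * swap x y) + 1 = numCycles π := by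
  have h := numCycles_mul_swap_of_apply_eq (π := π * swap x y) hxy.symm (by simp [hx])
  rwa [swap_comm y x, mul_assoc, swap_mul_self, mul_one, eq_comm] at h

end CycleCounting

section CycleType

variable {α : Type*} [Fintype α] [DecidableEq α]

/-- The cycle of `π` through a point, encoded as the point itself if it is fixed and as a factor
of the cycle decomposition otherwise. -/
def cycleThrough (π : Perm α) (a : α) : {x // π x = x} ⊕ π.cycleFactorsFinset :=
  if h : π a = a then .inl ⟨a, h⟩
  else .inr ⟨π.cycleOf a, cycleOf_mem_cycleFactorsFinset_iff.2 (mem_support.2 h)⟩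

lemma cycleThrough_surjective (π : Perm α) : Function.Surjective (cycleThrough π) := by
  rintro (⟨a, ha⟩ | ⟨c, hc⟩)
  · exact ⟨a, dif_pos ha⟩
  · obtain ⟨a, ha⟩ := IsCycle.nonempty_support (mem_cycleFactorsFinset_iff.1 hc).1
    have hmoved : π a ≠ a := mem_support.1 (mem_cycleFactorsFinset_support_le hc ha)
    exact ⟨a, by simp [cycleThrough, hmoved, cycle_is_cycleOf ha hc]⟩

lemma ker_cycleThrough (π : Perm α) : Setoid.ker (cycleThrough π) = SameCycle.setoid π := by
  ext a b
  change cycleThrough π a = cycleThrough π b ↔ SameCycle π a b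
  by_cases ha : π a = a <;> by_cases hb : π b = b
  · simpa [cycleThrough, ha, hb] using ⟨fun h => h.sameCycle π, fun h => h.eq_of_left ha⟩
  · simpa [cycleThrough, ha, hb] using fun h : SameCycle π a b => hb (h.apply_eq_self_iff.1 ha)
  · simpa [cycleThrough, ha, hb] using fun h : SameCycle π a b => ha (h.apply_eq_self_iff.2 hb)
  · simpa [cycleThrough, ha, hb] using (sameCycle_iff_cycleOf_eq_of_mem_support
      (mem_support.2 ha) (mem_support.2 hb)).symm

lemma numCycles_add_card_support (π : Perm α) :
    numCycles π + #π.support = Fintype.card α + Multiset.card π.cycleType := by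
  have hfixed : Fintype.card {x // π x = x} + #π.support = Fintype.card α := by
    rw [Fintype.card_subtype]
    exact card_filter_add_card_filter_not fun x => π x = x
  rw [numCycles, ← ker_cycleThrough,
    Nat.card_congr (Setoid.quotientKerEquivOfSurjective _ (cycleThrough_surjective π)),
    Nat.card_sum, Nat.card_eq_fintype_card, Nat.card_eq_fintype_card, Fintype.card_coe,
    cycleType_def, Multiset.card_map, card_val, ← hfixed]
  exact add_right_comm _ _ _

end CycleType

section StarDistance

variable {α : Type*} [DecidableEq α]

/-- The least number of transpositions `swap a j` with `j ≠ a` whose successive multiplication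
from the right turns `π` into the identity; `ped` is the case `a = 0` of `Fin n`. -/
noncomputable def starDistance (a : α) (π : Perm α) : ℕ :=
  sInf {k | ∃ l : List α, l.length = k ∧ (∀ j ∈ l, j ≠ a) ∧
    l.foldl (fun τ j => τ * swap a j) π = 1}

variable [Fintype α]

/-- The number of cycles of `π` plus twice the number of points other than `a` moved by `π`: up to
the constant `Fintype.card α`, this is `starDistance a π`. -/
noncomputable def starWeight (a : α) (π : Perm α) : ℕ :=
  numCycles π + 2 * #(π.support.erase a)

lemma starWeight_one (a : α) : starWeight a (1 : Perm α) = Fintype.card α := by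
  simpa [starWeight] using numCycles_add_card_support (1 : Perm α)

lemma support_mul_swap_erase_erase (π : Perm α) (a j : α) :
    ((π * swap a j).support.erase a).erase j = (π.support.erase a).erase j := by
  ext x
  simp only [mem_erase, mem_support, Perm.mul_apply]
  refine and_congr_right fun hj => and_congr_right fun ha => ?_
  rw [swap_apply_of_ne_of_ne ha hj]

lemma card_support_erase_mul_swap_of_apply_eq {π : Perm α} {a j : α} (hj : j ≠ a) (h : π a = j) :
    #((π * swap a j).support.erase a) + 1 = #(π.support.erase a) := by
  have hmem : j ∈ π.support.erase a :=
    mem_erase.2 ⟨hj, mem_support.2 fun hfix => hj (π.injective (hfix.trans h.symm))⟩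
  have hnot : j ∉ (π * swap a j).support.erase a := by simp [h]
  rw [← card_erase_add_one hmem, ← support_mul_swap_erase_erase, erase_eq_of_notMem hnot]

lemma starWeight_mul_swap_add_one_of_apply_eq {π : Perm α} {a j : α} (hj : j ≠ a)
    (h : π a = j) : starWeight a (π * swap a j) + 1 = starWeight a π := by
  have hcycles := numCycles_mul_swap_of_apply_eq hj.symm h
  have hmoved := card_support_erase_mul_swap_of_apply_eq hj h
  unfold starWeight
  omega

lemma support_erase_mul_swap_of_apply_ne {π : Perm α} {a j : α} (hj : j ≠ a) (h : π a ≠ j) :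
    (π * swap a j).support.erase a = insert j (π.support.erase a) := by
  have hmem : j ∈ (π * swap a j).support.erase a := by simp [hj, h]
  rw [← insert_erase hmem, support_mul_swap_erase_erase]
  grind

lemma starWeight_le_mul_swap_add_one (π : Perm α) {a j : α} (hj : j ≠ a) :
    starWeight a π ≤ starWeight a (π * swap a j) + 1 := by
  by_cases h : π a = j
  · exact (starWeight_mul_swap_add_one_of_apply_eq hj h).ge
  · have hcycles := numCycles_le_mul_swap_add_one π a j
    have hmoved : #(π.support.erase a) ≤ #((π * swap a j).support.erase a) := by
      rw [support_erase_mul_swap_of_apply_ne hj h]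
      exact card_le_card (subset_insert _ _)
    unfold starWeight
    omega

lemma exists_starWeight_mul_swap_add_one_eq (a : α) {π : Perm α} (hπ : π ≠ 1) :
    ∃ j ≠ a, starWeight a (π * swap a j) + 1 = starWeight a π := by
  by_cases ha : π a = a
  · obtain ⟨j, hj⟩ : ∃ j, π j ≠ j := not_forall.1 fun h => hπ (Equiv.ext h)
    have hja : j ≠ a := by rintro rfl; exact hj ha
    have hmem : j ∈ π.support.erase a := mem_erase.2 ⟨hja, mem_support.2 hj⟩
    have hcycles := numCycles_mul_swap_add_one_of_apply_eq_self hja.symm ha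
    refine ⟨j, hja, ?_⟩
    rw [starWeight, support_erase_mul_swap_of_apply_ne hja (ha.trans_ne hja.symm),
      insert_eq_of_mem hmem, starWeight, ← hcycles]
    omega
  · exact ⟨π a, ha, starWeight_mul_swap_add_one_of_apply_eq ha rfl⟩

lemma starWeight_le_length_add_card {a : α} {π : Perm α} {l : List α} (hl : ∀ j ∈ l, j ≠ a)
    (h : l.foldl (fun τ j => τ * swap a j) π = 1) :
    starWeight a π ≤ l.length + Fintype.card α := by
  induction l generalizing π with
  | nil =>
    obtain rfl : π = 1 := h
    simp [starWeight_one]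
  | cons j l ih =>
    rw [List.forall_mem_cons] at hl
    have hstep := starWeight_le_mul_swap_add_one π hl.1
    have htail : starWeight a (π * swap a j) ≤ l.length + Fintype.card α := ih hl.2 h
    rw [List.length_cons]
    omega

lemma exists_length_add_card_eq_starWeight (a : α) (π : Perm α) :
    ∃ l : List α, l.length + Fintype.card α = starWeight a π ∧ (∀ j ∈ l, j ≠ a) ∧
      l.foldl (fun τ j => τ * swap a j) π = 1 := by
  induction hw : starWeight a π using Nat.strong_induction_on generalizing π with
  | _ w ih =>
    by_cases hπ : π = 1
    · exact ⟨[], by simp [← hw, hπ, starWeight_one], by simp, hπ⟩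
    · obtain ⟨j, hj, hstep⟩ := exists_starWeight_mul_swap_add_one_eq a hπ
      obtain ⟨l, hlen, hl, hfold⟩ := ih _ (by omega) (π * swap a j) rfl
      refine ⟨j :: l, ?_, List.forall_mem_cons.2 ⟨hj, hl⟩, hfold⟩
      rw [List.length_cons]
      omega

lemma starDistance_add_card (a : α) (π : Perm α) :
    starDistance a π + Fintype.card α = starWeight a π := by
  obtain ⟨l, hlen, hl, hfold⟩ := exists_length_add_card_eq_starWeight a π
  have hleast : IsLeast {k | ∃ l : List α, l.length = k ∧ (∀ j ∈ l, j ≠ a) ∧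
      l.foldl (fun τ j => τ * swap a j) π = 1} l.length := by
    refine ⟨⟨l, rfl, hl, hfold⟩, ?_⟩
    rintro _ ⟨l', rfl, hl', hfold'⟩
    have := starWeight_le_length_add_card hl' hfold'
    omega
  rw [starDistance, hleast.csInf_eq, hlen]

end StarDistance

lemma fixedCount_add_card_support {n : ℕ} (π : Perm (Fin n)) :
    fixedCount π + #π.support = n := by
  simpa [fixedCount, support] using card_filter_add_card_filter_not (s := univ) fun x => π x = x

theorem prefix_exchange_distance_formula_general {α : Type*} [Fintype α] [DecidableEq α]
    (a : α) (π : Perm α) :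
    (starDistance a π : ℤ) =
      #π.support + Multiset.card π.cycleType - if π a = a then 0 else 2 := by
  have hdist := starDistance_add_card a π
  have hcycles := numCycles_add_card_support π
  rw [starWeight] at hdist
  split_ifs with ha
  · rw [erase_eq_of_notMem (notMem_support.2 ha)] at hdist
    omega
  · have herase := card_erase_add_one (mem_support.2 ha)
    omega

/-- For every permutation `π` of `{1,…,n}`,
`ped(π) = n + c(Γ(π)) - 2 c₁(Γ(π)) - δ`, where `δ = 0` if `π₁ = 1` and `δ = 2`
otherwise. -/
theorem prefix_exchange_distance_formula {n : ℕ} [NeZero n] (π : Equiv.Perm (Fin n)) :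
    (ped π : ℤ) = (n : ℤ) + (cycleCount π : ℤ) - 2 * (fixedCount π : ℤ) -
      (if π 0 = 0 then 0 else 2) := by
  have hfixed := fixedCount_add_card_support π
  rw [show ped π = starDistance 0 π from rfl, prefix_exchange_distance_formula_general, cycleCount]
  omega
end

section
/- For any 1 < i ≤ j ≤ n, applying to a signed permutation π the three prefix signed reversals of lengths j, then j−i+1, then j, yields exactly π ∘ ρ̄(i,j), the result of applying the signed reversal ρ̄(i,j) to π; consequently the effect of any signed reversal can be mimicked by at most three prefix signed reversals. -/
/-!
Reflecting the positions in `[l, r]` carries a subinterval `[a, b]` to `[l + r - b, l + r - a]`, so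
conjugating the signed reversal of `[a, b]` by that of `[l, r]` gives the signed reversal of the
reflected subinterval; the two outer sign changes cancel. For `[l, r] = [1, j]` the interval
`[i, j]` is the reflection of the prefix `[1, j - i + 1]`.
-/

/-- A signed permutation of size `n`, in one-line notation: the (0-indexed) position `i`
holds the signed value `π i`; the absolute values form a permutation of `{1,…,n}`.
This encodes a bijection of `{-n,…,-1,1,…,n}` satisfying `π(-i) = -π(i)`. -/
def IsSignedPerm {n : ℕ} (π : Fin n → ℤ) : Prop :=
  (∀ i, 1 ≤ (π i).natAbs ∧ (π i).natAbs ≤ n) ∧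
    Function.Injective fun i => (π i).natAbs

/-- The signed reversal `ρ̄(i,j)` (with 1-indexed `i ≤ j`) applied to `π` : the
(1-indexed) position `k` with `i ≤ k ≤ j` receives `-π (i+j-k)`, other positions are
unchanged. -/
def signedReversal {n : ℕ} (i j : ℕ) (π : Fin n → ℤ) : Fin n → ℤ :=
  fun k =>
    if h : 1 ≤ i ∧ i ≤ (k : ℕ) + 1 ∧ (k : ℕ) + 1 ≤ j ∧ j ≤ n then
      -π ⟨i + j - (k : ℕ) - 2, by have := k.isLt; omega⟩
    else π k

/-- The prefix signed reversal of length `j`, i.e. `ρ̄(1,j)`. -/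
def prefixSignedReversal {n : ℕ} (j : ℕ) (π : Fin n → ℤ) : Fin n → ℤ :=
  signedReversal 1 j π

section SignedReversal

variable {n i j : ℕ} (π : Fin n → ℤ) {k : Fin n}

-- The two 1-indexed positions have sum `i + j`; the `+ 2` comes from the 0-indexing of `Fin n`.
theorem signedReversal_apply_of_add_eq {k' : Fin n} (hi : 1 ≤ i) (hjn : j ≤ n)
    (hk : i ≤ (k : ℕ) + 1 ∧ (k : ℕ) + 1 ≤ j) (hk' : (k : ℕ) + k' + 2 = i + j) :
    signedReversal i j π k = -π k' := by
  have reflection_eq : i + j - (k : ℕ) - 2 = k' := by omega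
  simp only [signedReversal, hi, hk, hjn, and_self, dif_pos, reflection_eq]

theorem signedReversal_apply_of_notMem (hk : ¬(i ≤ (k : ℕ) + 1 ∧ (k : ℕ) + 1 ≤ j)) :
    signedReversal i j π k = π k :=
  dif_neg fun h => hk ⟨h.2.1, h.2.2.1⟩

theorem exists_reflected_position (hi : 1 ≤ i) (hjn : j ≤ n)
    (hk : i ≤ (k : ℕ) + 1 ∧ (k : ℕ) + 1 ≤ j) :
    ∃ k' : Fin n, (k : ℕ) + k' + 2 = i + j :=
  ⟨⟨i + j - k - 2, by omega⟩, by simp only; omega⟩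

theorem signedReversal_conj {l r a b : ℕ} (hl : 1 ≤ l) (hla : l ≤ a) (hbr : b ≤ r) (hrn : r ≤ n) :
    signedReversal l r (signedReversal a b (signedReversal l r π)) =
      signedReversal (l + r - b) (l + r - a) π := by
  funext k
  by_cases hk : l ≤ (k : ℕ) + 1 ∧ (k : ℕ) + 1 ≤ r
  · obtain ⟨k₁, hk₁⟩ := exists_reflected_position hl hrn hk
    rw [signedReversal_apply_of_add_eq _ hl hrn hk hk₁]
    by_cases hmem : a ≤ (k₁ : ℕ) + 1 ∧ (k₁ : ℕ) + 1 ≤ b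
    · obtain ⟨k₂, hk₂⟩ := exists_reflected_position (hl.trans hla) (hbr.trans hrn) hmem
      obtain ⟨k₃, hk₃⟩ := exists_reflected_position (k := k₂) hl hrn (by omega)
      calc -signedReversal a b (signedReversal l r π) k₁
          = signedReversal l r π k₂ := by
            rw [signedReversal_apply_of_add_eq _ (by omega) (by omega) hmem hk₂, neg_neg]
        _ = -π k₃ := signedReversal_apply_of_add_eq _ hl hrn (by omega) hk₃
        _ = signedReversal (l + r - b) (l + r - a) π k :=
            (signedReversal_apply_of_add_eq _ (by omega) (by omega) (by omega) (by omega)).symm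
    · calc -signedReversal a b (signedReversal l r π) k₁
          = -signedReversal l r π k₁ := by rw [signedReversal_apply_of_notMem _ hmem]
        _ = π k := by
            rw [signedReversal_apply_of_add_eq (k' := k) _ hl hrn (by omega) (by omega), neg_neg]
        _ = signedReversal (l + r - b) (l + r - a) π k :=
            (signedReversal_apply_of_notMem _ (by omega)).symm
  · rw [signedReversal_apply_of_notMem _ hk, signedReversal_apply_of_notMem _ (by omega),
      signedReversal_apply_of_notMem _ hk, signedReversal_apply_of_notMem _ (by omega)]

theorem signed_reversal_eq_three_prefix_signed_reversals_general
    (hi : 1 ≤ i) (hij : i ≤ j) (hjn : j ≤ n) :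
    prefixSignedReversal j (prefixSignedReversal (j - i + 1) (prefixSignedReversal j π)) =
      signedReversal i j π := by
  calc prefixSignedReversal j (prefixSignedReversal (j - i + 1) (prefixSignedReversal j π))
      = signedReversal (1 + j - (j - i + 1)) (1 + j - 1) π :=
        signedReversal_conj π le_rfl le_rfl (by omega) hjn
    _ = signedReversal i j π := by congr 1 <;> omega

end SignedReversal

/-- For any `1 < i ≤ j ≤ n`, applying to a signed permutation `π` the three prefix
signed reversals of lengths `j`, then `j-i+1`, then `j`, yields exactly
`π ∘ ρ̄(i,j)`; consequently any signed reversal can be mimicked by at most three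
prefix signed reversals. -/
theorem signed_reversal_eq_three_prefix_signed_reversals {n : ℕ} (i j : ℕ)
    (h1 : 1 < i) (hij : i ≤ j) (hjn : j ≤ n) (π : Fin n → ℤ) (hπ : IsSignedPerm π) :
    prefixSignedReversal j (prefixSignedReversal (j - i + 1) (prefixSignedReversal j π)) =
      signedReversal i j π :=
  signed_reversal_eq_three_prefix_signed_reversals_general π h1.le hij hjn
end

section
/- For any 1 < i ≤ j ≤ n, applying to a permutation π of {1,…,n} the three prefix reversals of lengths j, then j−i+1, then j, yields exactly π ∘ ρ(i,j), the result of applying the reversal ρ(i,j) to π; consequently the effect of any reversal can be mimicked by at most three prefix reversals. -/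
/-- A permutation of `{1,…,n}` in one-line notation: the (0-indexed) position `i`
holds the value `π i`; the values form a permutation of `{1,…,n}`. -/
def IsPermSeq {n : ℕ} (π : Fin n → ℕ) : Prop :=
  (∀ i, 1 ≤ π i ∧ π i ≤ n) ∧ Function.Injective π

/-- The reversal `ρ(i,j)` (with 1-indexed `i ≤ j`) applied to `π` : the (1-indexed)
position `k` with `i ≤ k ≤ j` receives `π (i+j-k)`, other positions are unchanged. -/
def reversal {n : ℕ} (i j : ℕ) (π : Fin n → ℕ) : Fin n → ℕ :=
  fun k =>
    if h : 1 ≤ i ∧ i ≤ (k : ℕ) + 1 ∧ (k : ℕ) + 1 ≤ j ∧ j ≤ n then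
      π ⟨i + j - (k : ℕ) - 2, by have := k.isLt; omega⟩
    else π k

/-- The prefix reversal of length `j`, i.e. `ρ(1,j)`. -/
def prefixReversal {n : ℕ} (j : ℕ) (π : Fin n → ℕ) : Fin n → ℕ :=
  reversal 1 j π

/-!
If `[a,b] ⊆ [c,d]`, then `ρ(c,d)` carries the block `[a,b]` to its mirror image `[c+d-b,c+d-a]`, so
conjugating `ρ(a,b)` by the involution `ρ(c,d)` gives the reversal of that mirror image. For two
prefixes `[1,j-i+1] ⊆ [1,j]` the mirror image is `[i,j]`.
-/

/-- The reversal `ρ(i,j)` as a map on positions, with the same conventions as `reversal`: block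
bounds are 1-indexed, positions are 0-indexed, and `i = 0` or `n < j` give the identity. -/
def reversalIndex {n : ℕ} (i j : ℕ) (k : Fin n) : Fin n :=
  if h : (1 ≤ i ∧ j ≤ n) ∧ (k : ℕ) + 1 ∈ Set.Icc i j then
    ⟨i + j - k - 2, by have := h.2.1; have := h.2.2; omega⟩
  else k

section reversalIndex

variable {n i j : ℕ} {k : Fin n}

theorem val_reversalIndex_of_mem (hi : 1 ≤ i) (hj : j ≤ n) (hk : (k : ℕ) + 1 ∈ Set.Icc i j) :
    (reversalIndex i j k : ℕ) = i + j - k - 2 := by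
  rw [reversalIndex, dif_pos ⟨⟨hi, hj⟩, hk⟩]

theorem reversalIndex_of_notMem (hk : (k : ℕ) + 1 ∉ Set.Icc i j) : reversalIndex i j k = k :=
  dif_neg fun h => hk h.2

theorem reversalIndex_of_not_le (h : ¬(1 ≤ i ∧ j ≤ n)) : reversalIndex i j k = k :=
  dif_neg fun h' => h h'.1

theorem reversalIndex_mem (hi : 1 ≤ i) (hj : j ≤ n) (hk : (k : ℕ) + 1 ∈ Set.Icc i j) :
    (reversalIndex i j k : ℕ) + 1 ∈ Set.Icc i j := by
  rw [val_reversalIndex_of_mem hi hj hk]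
  rw [Set.mem_Icc] at hk ⊢
  omega

theorem reversalIndex_involutive (n i j : ℕ) :
    Function.Involutive (reversalIndex i j : Fin n → Fin n) := by
  intro k
  by_cases hij : 1 ≤ i ∧ j ≤ n
  · by_cases hk : (k : ℕ) + 1 ∈ Set.Icc i j
    · ext
      rw [val_reversalIndex_of_mem hij.1 hij.2 (reversalIndex_mem hij.1 hij.2 hk),
        val_reversalIndex_of_mem hij.1 hij.2 hk]
      rw [Set.mem_Icc] at hk
      omega
    · simp only [reversalIndex_of_notMem hk]
  · simp only [reversalIndex_of_not_le hij]

theorem reversalIndex_semiconj {a b c d : ℕ} (hc : 1 ≤ c) (hca : c ≤ a) (hbd : b ≤ d)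
    (hd : d ≤ n) :
    Function.Semiconj (reversalIndex c d : Fin n → Fin n) (reversalIndex a b)
      (reversalIndex (c + d - b) (c + d - a)) := by
  intro k
  have inner_subset : Set.Icc a b ⊆ Set.Icc c d := Set.Icc_subset_Icc hca hbd
  have mirror_subset : Set.Icc (c + d - b) (c + d - a) ⊆ Set.Icc c d :=
    Set.Icc_subset_Icc (by omega) (by omega)
  by_cases hcd : (k : ℕ) + 1 ∈ Set.Icc c d
  · have val_cd := val_reversalIndex_of_mem hc hd hcd
    have mem_mirror : (reversalIndex c d k : ℕ) + 1 ∈ Set.Icc (c + d - b) (c + d - a) ↔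
        (k : ℕ) + 1 ∈ Set.Icc a b := by
      rw [val_cd]
      simp only [Set.mem_Icc] at hcd ⊢
      omega
    by_cases hab : (k : ℕ) + 1 ∈ Set.Icc a b
    · have ha : 1 ≤ a := hc.trans hca
      have hb : b ≤ n := hbd.trans hd
      ext
      rw [val_reversalIndex_of_mem hc hd (inner_subset (reversalIndex_mem ha hb hab)),
        val_reversalIndex_of_mem ha hb hab,
        val_reversalIndex_of_mem (by omega) (by omega) (mem_mirror.2 hab), val_cd]
      rw [Set.mem_Icc] at hab
      omega
    · rw [reversalIndex_of_notMem hab, reversalIndex_of_notMem (mem_mirror.not.2 hab)]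
  · rw [reversalIndex_of_notMem fun h => hcd (inner_subset h), reversalIndex_of_notMem hcd,
      reversalIndex_of_notMem fun h => hcd (mirror_subset h)]

end reversalIndex

theorem reversal_eq_comp_reversalIndex {n : ℕ} (i j : ℕ) (π : Fin n → ℕ) :
    reversal i j π = π ∘ reversalIndex i j := by
  funext k
  have cond_iff : (1 ≤ i ∧ i ≤ (k : ℕ) + 1 ∧ (k : ℕ) + 1 ≤ j ∧ j ≤ n) ↔
      (1 ≤ i ∧ j ≤ n) ∧ (k : ℕ) + 1 ∈ Set.Icc i j := by
    rw [Set.mem_Icc]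
    tauto
  simp only [reversal, reversalIndex, Function.comp_apply, cond_iff, apply_dite π]

theorem reversal_conj {n a b c d : ℕ} (hc : 1 ≤ c) (hca : c ≤ a) (hbd : b ≤ d) (hd : d ≤ n)
    (π : Fin n → ℕ) :
    reversal c d (reversal a b (reversal c d π)) = reversal (c + d - b) (c + d - a) π := by
  simp only [reversal_eq_comp_reversalIndex, Function.comp_assoc]
  rw [← Function.comp_assoc (reversalIndex c d) (reversalIndex a b),
    (reversalIndex_semiconj hc hca hbd hd).comp_eq, Function.comp_assoc,
    (reversalIndex_involutive n c d).comp_self, Function.comp_id]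

theorem reversal_eq_three_prefix_reversals_general {n i j : ℕ} (hi : 1 ≤ i) (hij : i ≤ j)
    (hjn : j ≤ n) (π : Fin n → ℕ) :
    prefixReversal j (prefixReversal (j - i + 1) (prefixReversal j π)) = reversal i j π := by
  have left_bound : 1 + j - (j - i + 1) = i := by omega
  have right_bound : 1 + j - 1 = j := by omega
  calc prefixReversal j (prefixReversal (j - i + 1) (prefixReversal j π))
      = reversal (1 + j - (j - i + 1)) (1 + j - 1) π :=
        reversal_conj le_rfl le_rfl (by omega) hjn π
    _ = reversal i j π := by rw [left_bound, right_bound]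

/-- For any `1 < i ≤ j ≤ n`, applying to a permutation `π` of `{1,…,n}` the three
prefix reversals of lengths `j`, then `j-i+1`, then `j`, yields exactly `π ∘ ρ(i,j)`;
consequently any reversal can be mimicked by at most three prefix reversals. -/
theorem reversal_eq_three_prefix_reversals {n : ℕ} (i j : ℕ)
    (h1 : 1 < i) (hij : i ≤ j) (hjn : j ≤ n) (π : Fin n → ℕ) (hπ : IsPermSeq π) :
    prefixReversal j (prefixReversal (j - i + 1) (prefixReversal j π)) =
      reversal i j π :=
  reversal_eq_three_prefix_reversals_general h1.le hij hjn π
end
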